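/- Weak comparison principle for finite subsets: Let p ∈ (1,∞) and let K ⊆ K̃ ⊆ X with K and K̃ finite and λ₀(K̃) > 0. Let v ∈ F(K) satisfy Hv ≥ 0 on K and v ≥ 0 on ∂K ∪ (K̃∖K), and let u ∈ F(K) satisfy Hu ≤ Hv on K and u ≤ v on ∂K ∪ (K̃∖K). If either (a) v vanishes outside K̃, or (b) u vanishes outside K̃, Hu ≥ 0 on K, and u ≥ 0 on ∂K ∪ (K̃∖K), then u ≤ v on K. -/

import Mathlib

open scoped BigOperators

/-- `⟨a⟩_p := |a|^{p-1} · sgn(a)`. -/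
noncomputable def pPow (p a : ℝ) : ℝ := |a| ^ (p - 1) * Real.sign a

/-- `C(V)`: real-valued functions on `X` vanishing outside `V`. -/
def MemC {X : Type*} (V : Set X) (f : X → ℝ) : Prop := ∀ x ∉ V, f x = 0

/-- `C_c(V)`: finitely supported functions with support contained in `V`. -/
def MemCc {X : Type*} (V : Set X) (f : X → ℝ) : Prop :=
  (Function.support f).Finite ∧ ∀ x ∉ V, f x = 0

/-- The formal space `F(V)`. -/
def MemF {X : Type*} (b : X → X → ℝ) (p : ℝ) (V : Set X) (f : X → ℝ) : Prop :=
  ∀ x ∈ V, Summable fun y => b x y * |f y| ^ (p - 1)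

/-- The domain `D` of the energy functional. -/
def MemD {X : Type*} (b : X → X → ℝ) (c : X → ℝ) (p : ℝ) (f : X → ℝ) : Prop :=
  (Summable fun z : X × X => b z.1 z.2 * |f z.1 - f z.2| ^ p) ∧
  (Summable fun x => |c x| * |f x| ^ p)

/-- The `p`-energy functional `h`. -/
noncomputable def energy {X : Type*} (b : X → X → ℝ) (c : X → ℝ) (p : ℝ) (f : X → ℝ) : ℝ :=
  (1 / 2) * ∑' z : X × X, b z.1 z.2 * |f z.1 - f z.2| ^ p + ∑' x, c x * |f x| ^ p

/-- The `p`-Schrödinger operator `H`. -/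
noncomputable def HOp {X : Type*} (m : X → ℝ) (b : X → X → ℝ) (c : X → ℝ) (p : ℝ)
    (f : X → ℝ) (x : X) : ℝ :=
  (1 / m x) * ∑' y, b x y * pPow p (f x - f y) + (c x / m x) * pPow p (f x)

/-- The `p`-Laplacian `L` (i.e. `H` with potential `0`). -/
noncomputable def LOp {X : Type*} (m : X → ℝ) (b : X → X → ℝ) (p : ℝ)
    (f : X → ℝ) (x : X) : ℝ :=
  (1 / m x) * ∑' y, b x y * pPow p (f x - f y)

/-- `(X, m, b)` is a weighted graph. -/
def IsGraph {X : Type*} (m : X → ℝ) (b : X → X → ℝ) : Prop :=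
  (∀ x, 0 < m x) ∧ (∀ x y, 0 ≤ b x y) ∧ (∀ x y, b x y = b y x) ∧
  (∀ x, b x x = 0) ∧ (∀ x, Summable fun y => b x y)

/-- A set `V` is connected w.r.t. the graph: any two of its vertices are joined by a
path of neighbours inside `V`. -/
def ConnectedIn {X : Type*} (b : X → X → ℝ) (V : Set X) : Prop :=
  ∀ x ∈ V, ∀ y ∈ V, Relation.ReflTransGen (fun u v => u ∈ V ∧ v ∈ V ∧ 0 < b u v) x y

/-- The (outer) boundary `∂V`. -/
def bdry {X : Type*} (b : X → X → ℝ) (V : Set X) : Set X :=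
  {y | y ∉ V ∧ ∃ z ∈ V, 0 < b y z}

/-- `u` is harmonic on `V` (w.r.t. `H`). -/
def HarmonicOn {X : Type*} (m : X → ℝ) (b : X → X → ℝ) (c : X → ℝ) (p : ℝ)
    (V : Set X) (u : X → ℝ) : Prop := ∀ x ∈ V, HOp m b c p u x = 0

/-- `u` is superharmonic on `V` (w.r.t. `H`). -/
def SuperharmonicOn {X : Type*} (m : X → ℝ) (b : X → X → ℝ) (c : X → ℝ) (p : ℝ)
    (V : Set X) (u : X → ℝ) : Prop := ∀ x ∈ V, 0 ≤ HOp m b c p u x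

/-- `h` is non-negative on `C_c(V)`. -/
def EnergyNonneg {X : Type*} (b : X → X → ℝ) (c : X → ℝ) (p : ℝ) (V : Set X) : Prop :=
  ∀ φ : X → ℝ, MemCc V φ → 0 ≤ energy b c p φ

/-- `h` is subcritical in `V`: a Hardy inequality holds. -/
def Subcritical {X : Type*} (b : X → X → ℝ) (c : X → ℝ) (p : ℝ) (V : Set X) : Prop :=
  ∃ w : X → ℝ, (∀ x, 0 ≤ w x) ∧ w ≠ 0 ∧
    ∀ φ : X → ℝ, MemCc V φ → (∑' x, |φ x| ^ p * w x) ≤ energy b c p φ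

/-- `h` is critical in `V`. -/
def Critical {X : Type*} (b : X → X → ℝ) (c : X → ℝ) (p : ℝ) (V : Set X) : Prop :=
  EnergyNonneg b c p V ∧ ¬ Subcritical b c p V

/-- The bottom of the spectrum / variational constant `λ₀(V)`. -/
noncomputable def lam0 {X : Type*} (m : X → ℝ) (b : X → X → ℝ) (c : X → ℝ) (p : ℝ)
    (V : Set X) : ℝ :=
  sInf {r : ℝ | ∃ φ : X → ℝ, MemCc V φ ∧ φ ≠ 0 ∧
    r = energy b c p φ / ∑' x, |φ x| ^ p * m x}

/-- The variational `p`-capacity `cap_h(x, V)`. -/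
noncomputable def capH {X : Type*} (b : X → X → ℝ) (c : X → ℝ) (p : ℝ)
    (V : Set X) (x : X) : ℝ :=
  sInf {r : ℝ | ∃ φ : X → ℝ, MemCc V φ ∧ φ x = 1 ∧ r = energy b c p φ}

/-- The weighted bracket `⟨f, g⟩_V = Σ_{x ∈ V} f(x) g(x) m(x)`. -/
noncomputable def bracket {X : Type*} (m : X → ℝ) (V : Set X) (f g : X → ℝ) : ℝ :=
  ∑' x, Set.indicator V (fun x => f x * g x * m x) x

/-- `u ∈ M(V ∖ K)`: positive harmonic function of minimal growth in a neighbourhood of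
infinity in `V` (harmonic on `V∖K`, positive on `V ∪ ∂V`). -/
def MemM {X : Type*} (m : X → ℝ) (b : X → X → ℝ) (c : X → ℝ) (p : ℝ)
    (V K : Set X) (u : X → ℝ) : Prop :=
  HarmonicOn m b c p (V \ K) u ∧
  (∀ x ∈ V ∪ bdry b V, 0 ≤ u x) ∧ (∃ x ∈ V ∪ bdry b V, u x ≠ 0) ∧
  ∀ K' : Set X, K ⊆ K' → K' ⊆ V → K'.Finite → ConnectedIn b K' →
    ∀ v : X → ℝ, MemF b p (V \ K') v →
      (∀ x ∈ V \ K', 0 ≤ v x) → (∃ x ∈ V \ K', v x ≠ 0) →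
      SuperharmonicOn m b c p (V \ K') v →
      (∀ x ∈ K', u x ≤ v x) → ∀ x ∈ V \ K', u x ≤ v x

/-- `u` is a normalised Green's function in `V` at `o`. -/
def IsNormalisedGreen {X : Type*} (m : X → ℝ) (b : X → X → ℝ) (c : X → ℝ) (p : ℝ)
    (V : Set X) (o : X) (u : X → ℝ) : Prop :=
  MemM m b c p V {o} u ∧ MemF b p V u ∧ HOp m b c p u o ≠ 0 ∧
  ∀ x ∈ V, HOp m b c p u x = Set.indicator {o} (fun _ => (1:ℝ)) x

/-!
A nonnegative supersolution `v` dominates a subsolution `u` because `H` is homogeneous of degree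
`p - 1`. If `u ≤ v` failed, let `t > 1` be the largest ratio `u / v`. At a point where
`u = t v` the inequality `u ≤ t v` gives `t ^ (p - 1) Hv = H (t v) ≤ Hu ≤ Hv`, so `Hv ≤ 0`, and
equality propagates to the neighbours. Hence `v` is a subsolution on the contact set `{u = t v}`,
on whose boundary `t v = u ≤ v` forces `v ≤ 0`, and positivity of the energy yields `v ≤ 0` on the
contact set itself. The ratio makes sense once `u ≤ 0` on the zeros of `v`; there the strong minimum
principle isolates the set `{v = 0}` from the rest of `K`.
-/

section pPow

variable {p : ℝ}

theorem pPow_zero (p : ℝ) : pPow p 0 = 0 := by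
  simp [pPow]

theorem pPow_neg (p a : ℝ) : pPow p (-a) = -pPow p a := by
  rw [pPow, pPow, abs_neg, Real.sign_neg, mul_neg]

theorem pPow_of_pos (p : ℝ) {a : ℝ} (ha : 0 < a) : pPow p a = a ^ (p - 1) := by
  rw [pPow, Real.sign_of_pos ha, abs_of_pos ha, mul_one]

theorem pPow_mul_of_pos (p : ℝ) {t : ℝ} (ht : 0 < t) (a : ℝ) :
    pPow p (t * a) = t ^ (p - 1) * pPow p a := by
  have hsign : Real.sign (t * a) = Real.sign a := by
    simp only [Real.sign, mul_pos_iff_of_pos_left ht, mul_neg_iff, ht, ht.not_gt, true_and,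
      false_and, or_false]
  rw [pPow, pPow, hsign, abs_mul, abs_of_pos ht, Real.mul_rpow ht.le (abs_nonneg a), mul_assoc]

theorem pPow_mul_self (hp : p ≠ 0) (a : ℝ) : pPow p a * a = |a| ^ p := by
  have hsign : Real.sign a * a = |a| := by
    rcases lt_trichotomy a 0 with ha | rfl | ha
    · rw [Real.sign_of_neg ha, abs_of_neg ha, neg_one_mul]
    · simp
    · rw [Real.sign_of_pos ha, abs_of_pos ha, one_mul]
  rw [pPow, mul_assoc, hsign, ← Real.rpow_add_one' (abs_nonneg a) (by simpa using hp),
    sub_add_cancel]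

theorem pPow_strictMono (hp : 1 < p) : StrictMono (pPow p) := by
  refine strictMono_of_odd_strictMonoOn_nonneg (pPow_neg p) fun a ha b _ hab => ?_
  rw [Set.mem_Ici] at ha
  rw [pPow_of_pos p (ha.trans_lt hab)]
  rcases ha.eq_or_lt with rfl | ha
  · rw [pPow_zero]
    exact Real.rpow_pos_of_pos hab _
  · rw [pPow_of_pos p ha]
    exact Real.rpow_lt_rpow ha.le hab (sub_pos.2 hp)

theorem abs_pPow_le (p a : ℝ) : |pPow p a| ≤ |a| ^ (p - 1) := by
  have hsign : |Real.sign a| ≤ 1 := by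
    rcases Real.sign_apply_eq a with h | h | h <;> simp [h]
  have hpow : 0 ≤ |a| ^ (p - 1) := Real.rpow_nonneg (abs_nonneg a) _
  rw [pPow, abs_mul, abs_of_nonneg hpow]
  exact mul_le_of_le_one_right hpow hsign

theorem abs_pPow_sub_le (hp : 1 ≤ p) (a b : ℝ) :
    |pPow p (a - b)| ≤ 2 ^ (p - 1) * (|a| ^ (p - 1) + |b| ^ (p - 1)) := by
  have hab : |a - b| ≤ 2 * max |a| |b| := by
    linarith [abs_sub a b, le_max_left |a| |b|, le_max_right |a| |b|]
  have hmax : max |a| |b| ^ (p - 1) ≤ |a| ^ (p - 1) + |b| ^ (p - 1) := by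
    rw [Real.rpow_max (abs_nonneg a) (abs_nonneg b) (sub_nonneg.2 hp)]
    exact max_le_add_of_nonneg (Real.rpow_nonneg (abs_nonneg a) _)
      (Real.rpow_nonneg (abs_nonneg b) _)
  calc |pPow p (a - b)| ≤ |a - b| ^ (p - 1) := abs_pPow_le p _
    _ ≤ (2 * max |a| |b|) ^ (p - 1) :=
        Real.rpow_le_rpow (abs_nonneg _) hab (sub_nonneg.2 hp)
    _ = 2 ^ (p - 1) * max |a| |b| ^ (p - 1) :=
        Real.mul_rpow zero_le_two (le_max_of_le_left (abs_nonneg a))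
    _ ≤ 2 ^ (p - 1) * (|a| ^ (p - 1) + |b| ^ (p - 1)) := by gcongr

end pPow

section DoubleSeries

variable {α β : Type*}

theorem summable_prod_of_finite_left {F : α × β → ℝ} (s : Finset α)
    (hs : ∀ x ∉ s, ∀ y, F (x, y) = 0) (hF : ∀ x, Summable fun y => F (x, y)) : Summable F := by
  rw [← summable_abs_iff, summable_prod_of_nonneg fun z => abs_nonneg (F z)]
  refine ⟨fun x => (hF x).abs, summable_of_ne_finset_zero (s := s) fun x hx => ?_⟩
  simp [hs x hx]

theorem tsum_add_swap {F : α × α → ℝ} (hF : Summable F) :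
    ∑' z, (F z + F z.swap) = 2 * ∑' z, F z := by
  have hswap : Summable fun z => F (Prod.swap z) := (Equiv.prodComm α α).summable_iff.2 hF
  have htsum : ∑' z, F (Prod.swap z) = ∑' z, F z := (Equiv.prodComm α α).tsum_eq F
  rw [hF.tsum_add hswap, htsum, two_mul]

end DoubleSeries

theorem exists_one_lt_forall_le_mul {α : Type*} {s : Set α} (hs : s.Finite) {f g : α → ℝ}
    (hg : ∀ x ∈ s, 0 ≤ g x) (hzero : ∀ x ∈ s, g x = 0 → f x ≤ 0) (hlt : ∃ x ∈ s, g x < f x) :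
    ∃ t, 1 < t ∧ (∀ x ∈ s, f x ≤ t * g x) ∧ ∃ x ∈ s, 0 < g x ∧ f x = t * g x := by
  obtain ⟨a, ha, hfga⟩ := hlt
  have hga : 0 < g a := (hg a ha).lt_of_ne' fun h => (hzero a ha h).not_gt (h ▸ hfga)
  obtain ⟨x, ⟨hx, hgx⟩, hmax⟩ := Set.exists_max_image {x ∈ s | 0 < g x} (fun x => f x / g x)
    (hs.subset (Set.sep_subset s _)) ⟨a, ha, hga⟩
  refine ⟨f x / g x, ((one_lt_div hga).2 hfga).trans_le (hmax a ⟨ha, hga⟩), fun y hy => ?_,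
    x, hx, hgx, (div_mul_cancel₀ _ hgx.ne').symm⟩
  rcases (hg y hy).eq_or_lt with hgy | hgy
  · rw [← hgy, mul_zero]
    exact hzero y hy hgy.symm
  · exact (div_le_iff₀ hgy).1 (hmax y ⟨hy, hgy⟩)

section FunctionSpaces

variable {X : Type*} {b : X → X → ℝ} {p : ℝ} {V W : Set X} {f : X → ℝ}

theorem MemCc.mono (hf : MemCc V f) (hVW : V ⊆ W) : MemCc W f :=
  ⟨hf.1, fun x hx => hf.2 x (mt (@hVW x) hx)⟩

theorem MemCc.memF (hp : p ≠ 1) (hf : MemCc W f) : MemF b p V f := by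
  refine fun x _ => summable_of_hasFiniteSupport (hf.1.subset fun y hy hfy => hy ?_)
  simp [hfy, Real.zero_rpow (sub_ne_zero.2 hp)]

theorem memCc_indicator (hV : V.Finite) (f : X → ℝ) : MemCc V (V.indicator f) :=
  ⟨hV.subset Set.support_indicator_subset, fun _ hx => Set.indicator_of_notMem hx f⟩

theorem memCc_zero (V : Set X) : MemCc V 0 := by
  simp [MemCc]

theorem MemF.mono (hf : MemF b p V f) (hWV : W ⊆ V) : MemF b p W f :=
  fun x hx => hf x (hWV hx)

theorem MemF.neg (hf : MemF b p V f) : MemF b p V (-f) := by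
  simpa [MemF] using hf

theorem MemF.smul (hf : MemF b p V f) (t : ℝ) : MemF b p V (t • f) := by
  intro x hx
  simpa only [Pi.smul_apply, smul_eq_mul, abs_mul, Real.mul_rpow (abs_nonneg _) (abs_nonneg _),
    mul_left_comm] using (hf x hx).mul_left (|t| ^ (p - 1))

end FunctionSpaces

section Operator

variable {X : Type*} {m : X → ℝ} {b : X → X → ℝ} {c : X → ℝ} {p : ℝ} {V K : Set X}
  {f g : X → ℝ} {x y : X}

theorem HOp_zero (x : X) : HOp m b c p 0 x = 0 := by
  simp [HOp, pPow_zero]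

theorem HOp_neg (f : X → ℝ) (x : X) : HOp m b c p (-f) x = -HOp m b c p f x := by
  simp only [HOp, Pi.neg_apply, neg_sub_neg, ← neg_sub (f x), pPow_neg, mul_neg, tsum_neg,
    neg_add]

theorem HOp_smul (f : X → ℝ) (x : X) {t : ℝ} (ht : 0 < t) :
    HOp m b c p (t • f) x = t ^ (p - 1) * HOp m b c p f x := by
  simp only [HOp, Pi.smul_apply, smul_eq_mul, ← mul_sub, pPow_mul_of_pos p ht,
    mul_left_comm _ (t ^ (p - 1)), tsum_mul_left, ← mul_add]

theorem measure_mul_HOp (hm : m x ≠ 0) (f : X → ℝ) :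
    m x * HOp m b c p f x = ∑' y, b x y * pPow p (f x - f y) + c x * pPow p (f x) := by
  rw [HOp]
  field_simp

theorem IsGraph.measure_pos (hG : IsGraph m b) (x : X) : 0 < m x :=
  hG.1 x

theorem IsGraph.weight_nonneg (hG : IsGraph m b) (x y : X) : 0 ≤ b x y :=
  hG.2.1 x y

theorem IsGraph.weight_symm (hG : IsGraph m b) (x y : X) : b x y = b y x :=
  hG.2.2.1 x y

theorem IsGraph.summable_weight (hG : IsGraph m b) (x : X) : Summable fun y => b x y :=
  hG.2.2.2.2 x

theorem IsGraph.mem_union_bdry (hG : IsGraph m b) (hx : x ∈ K) (hxy : 0 < b x y) :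
    y ∈ K ∪ bdry b K := by
  by_cases hy : y ∈ K
  · exact Or.inl hy
  · exact Or.inr ⟨hy, x, hx, hG.weight_symm x y ▸ hxy⟩

theorem IsGraph.summable_mul_pPow_sub (hG : IsGraph m b) (hp : 1 ≤ p) (hf : MemF b p V f)
    (hx : x ∈ V) (a : ℝ) : Summable fun y => b x y * pPow p (a - f y) := by
  refine Summable.of_norm_bounded
    ((((hG.summable_weight x).mul_right (|a| ^ (p - 1))).add (hf x hx)).mul_left (2 ^ (p - 1)))
    fun y => ?_
  rw [Real.norm_eq_abs, abs_mul, abs_of_nonneg (hG.weight_nonneg x y), ← mul_add, mul_left_comm]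
  exact mul_le_mul_of_nonneg_left (abs_pPow_sub_le hp a (f y)) (hG.weight_nonneg x y)

theorem IsGraph.mul_pPow_sub_le (hG : IsGraph m b) (hp : 1 < p)
    (hfg : ∀ y, 0 < b x y → f y ≤ g y) (a : ℝ) (y : X) :
    b x y * pPow p (a - g y) ≤ b x y * pPow p (a - f y) := by
  rcases (hG.weight_nonneg x y).eq_or_lt with hxy | hxy
  · simp [← hxy]
  · exact mul_le_mul_of_nonneg_left
      ((pPow_strictMono hp).monotone (sub_le_sub_left (hfg y hxy) a)) hxy.le

theorem IsGraph.HOp_le_of_touching (hG : IsGraph m b) (hp : 1 < p) (hf : MemF b p V f)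
    (hg : MemF b p V g) (hx : x ∈ V) (hfgx : f x = g x) (hfg : ∀ y, 0 < b x y → f y ≤ g y) :
    HOp m b c p g x ≤ HOp m b c p f x := by
  refine le_of_mul_le_mul_left ?_ (hG.measure_pos x)
  rw [measure_mul_HOp (hG.measure_pos x).ne', measure_mul_HOp (hG.measure_pos x).ne', hfgx]
  gcongr ?_ + _
  exact (hG.summable_mul_pPow_sub hp.le hg hx _).tsum_le_tsum (hG.mul_pPow_sub_le hp hfg _)
    (hG.summable_mul_pPow_sub hp.le hf hx _)

theorem IsGraph.eq_of_touching_of_HOp_le (hG : IsGraph m b) (hp : 1 < p) (hf : MemF b p V f)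
    (hg : MemF b p V g) (hx : x ∈ V) (hfgx : f x = g x) (hfg : ∀ y, 0 < b x y → f y ≤ g y)
    (hH : HOp m b c p f x ≤ HOp m b c p g x) (hxy : 0 < b x y) : f y = g y := by
  by_contra hne
  refine hH.not_gt (lt_of_mul_lt_mul_left ?_ (hG.measure_pos x).le)
  rw [measure_mul_HOp (hG.measure_pos x).ne', measure_mul_HOp (hG.measure_pos x).ne', hfgx]
  gcongr ?_ + _
  have hlt : b x y * pPow p (g x - g y) < b x y * pPow p (g x - f y) :=
    mul_lt_mul_of_pos_left
      (pPow_strictMono hp (sub_lt_sub_left ((hfg y hxy).lt_of_ne hne) _)) hxy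
  exact (hG.summable_mul_pPow_sub hp.le hg hx _).tsum_lt_tsum (hG.mul_pPow_sub_le hp hfg _) hlt
    (hG.summable_mul_pPow_sub hp.le hf hx _)

theorem IsGraph.HOp_nonpos_of_eq_zero (hG : IsGraph m b) (hp : 1 < p) (hf : MemF b p V f)
    (hx : x ∈ V) (hfx : f x = 0) (hnonneg : ∀ y, 0 < b x y → 0 ≤ f y) :
    HOp m b c p f x ≤ 0 := by
  rw [← HOp_zero (m := m) (b := b) (c := c) (p := p) x]
  exact hG.HOp_le_of_touching hp ((memCc_zero V).memF hp.ne') hf hx hfx.symm hnonneg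

theorem IsGraph.eq_zero_of_HOp_nonneg (hG : IsGraph m b) (hp : 1 < p) (hf : MemF b p V f)
    (hx : x ∈ V) (hfx : f x = 0) (hnonneg : ∀ y, 0 < b x y → 0 ≤ f y)
    (hH : 0 ≤ HOp m b c p f x) (hxy : 0 < b x y) : f y = 0 := by
  rw [← HOp_zero (m := m) (b := b) (c := c) (p := p) x] at hH
  exact (hG.eq_of_touching_of_HOp_le hp ((memCc_zero V).memF hp.ne') hf hx hfx.symm hnonneg
    hH hxy).symm

end Operator

section Energy

variable {X : Type*} {m : X → ℝ} {b : X → X → ℝ} {c : X → ℝ} {p : ℝ} {V W : Set X}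
  {f : X → ℝ}

theorem IsGraph.tsum_mul_abs_sub_rpow (hG : IsGraph m b) (hp : 1 < p) {s : Finset X}
    (hf : MemCc (s : Set X) f) :
    ∑' z : X × X, b z.1 z.2 * |f z.1 - f z.2| ^ p =
      2 * ∑ x ∈ s, (∑' y, b x y * pPow p (f x - f y)) * f x := by
  let F : X × X → ℝ := fun z => b z.1 z.2 * pPow p (f z.1 - f z.2) * f z.1
  have hfiber (x : X) : Summable fun y => F (x, y) :=
    (hG.summable_mul_pPow_sub hp.le (hf.memF hp.ne') (Set.mem_univ x) (f x)).mul_right (f x)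
  have hF : Summable F :=
    summable_prod_of_finite_left s (fun x hx y => by simp [F, hf.2 x hx]) hfiber
  have hsymm (z : X × X) : b z.1 z.2 * |f z.1 - f z.2| ^ p = F z + F z.swap := by
    simp only [F, Prod.fst_swap, Prod.snd_swap]
    rw [← pPow_mul_self (zero_lt_one.trans hp).ne', hG.weight_symm z.2 z.1,
      ← neg_sub (f z.1) (f z.2), pPow_neg]
    ring
  calc ∑' z : X × X, b z.1 z.2 * |f z.1 - f z.2| ^ p = 2 * ∑' z, F z := by
        simp only [hsymm, tsum_add_swap hF]
    _ = 2 * ∑' x, (∑' y, b x y * pPow p (f x - f y)) * f x := by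
        rw [hF.tsum_prod' hfiber]
        simp only [F, tsum_mul_right]
    _ = 2 * ∑ x ∈ s, (∑' y, b x y * pPow p (f x - f y)) * f x := by
        rw [tsum_eq_sum fun x hx => by simp [hf.2 x hx]]

theorem IsGraph.energy_eq_sum_mul_HOp (hG : IsGraph m b) (hp : 1 < p) {s : Finset X}
    (hf : MemCc (s : Set X) f) :
    energy b c p f = ∑ x ∈ s, f x * (m x * HOp m b c p f x) := by
  have hp0 : p ≠ 0 := (zero_lt_one.trans hp).ne'
  have hpotential : ∑' x, c x * |f x| ^ p = ∑ x ∈ s, c x * (pPow p (f x) * f x) := by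
    simp only [pPow_mul_self hp0]
    exact tsum_eq_sum fun x hx => by simp [hf.2 x hx, Real.zero_rpow hp0]
  rw [energy, hG.tsum_mul_abs_sub_rpow hp hf, hpotential, ← mul_assoc,
    one_div_mul_cancel two_ne_zero, one_mul, ← Finset.sum_add_distrib]
  refine Finset.sum_congr rfl fun x _ => ?_
  rw [measure_mul_HOp (hG.measure_pos x).ne']
  ring

/-- The energy functional `h` is positive definite on `C_c(V)`. This is the form of `λ₀(V) > 0` that
passes to all subsets of `V`, the empty one included, where the junk value `sInf ∅ = 0` gives
`λ₀(∅) = 0`. -/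
def EnergyPosDef (b : X → X → ℝ) (c : X → ℝ) (p : ℝ) (V : Set X) : Prop :=
  ∀ φ : X → ℝ, MemCc V φ → φ ≠ 0 → 0 < energy b c p φ

theorem EnergyPosDef.mono (hV : EnergyPosDef b c p V) (hWV : W ⊆ V) : EnergyPosDef b c p W :=
  fun φ hφ => hV φ (hφ.mono hWV)

theorem energyPosDef_of_lam0_pos (hm : ∀ x, 0 ≤ m x) (hlam : 0 < lam0 m b c p V) :
    EnergyPosDef b c p V := by
  intro φ hφ hne
  have hbdd : BddBelow {r : ℝ | ∃ φ : X → ℝ, MemCc V φ ∧ φ ≠ 0 ∧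
      r = energy b c p φ / ∑' x, |φ x| ^ p * m x} := by
    by_contra hunbdd
    exact hlam.ne' (Real.sInf_of_not_bddBelow hunbdd)
  have hquot : 0 < energy b c p φ / ∑' x, |φ x| ^ p * m x :=
    hlam.trans_le (csInf_le hbdd ⟨φ, hφ, hne, rfl⟩)
  have hnorm : 0 ≤ ∑' x, |φ x| ^ p * m x :=
    tsum_nonneg fun x => mul_nonneg (Real.rpow_nonneg (abs_nonneg _) _) (hm x)
  by_contra! hneg
  exact (div_nonpos_of_nonpos_of_nonneg hneg hnorm).not_gt hquot

end Energy

section ComparisonPrinciples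

variable {X : Type*} {m : X → ℝ} {b : X → X → ℝ} {c : X → ℝ} {p : ℝ} {K : Set X}
  {f u v : X → ℝ}

theorem IsGraph.nonpos_of_HOp_nonpos (hG : IsGraph m b) (hp : 1 < p) (hK : K.Finite)
    (hE : EnergyPosDef b c p K) (hf : MemF b p K f)
    (hH : ∀ x ∈ K, 0 < f x → HOp m b c p f x ≤ 0) (hbdry : ∀ x ∈ bdry b K, f x ≤ 0) :
    ∀ x ∈ K, f x ≤ 0 := by
  lift K to Finset X using hK
  set g : X → ℝ := (K : Set X).indicator f⁺
  have hg : MemCc (K : Set X) g := memCc_indicator K.finite_toSet f⁺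
  have hgK {x : X} (hx : x ∈ K) : g x = max (f x) 0 := Set.indicator_of_mem hx f⁺
  have hfg {x : X} (hx : x ∈ (K : Set X) ∪ bdry b K) : f x ≤ g x := by
    rcases hx with hx | hx
    · exact hgK hx ▸ le_max_left _ _
    · exact (hbdry x hx).trans (hg.2 x hx.1).ge
  have hterm (x : X) (hx : x ∈ K) : g x * (m x * HOp m b c p g x) ≤ 0 := by
    rcases le_or_gt (f x) 0 with hfx | hfx
    · rw [hgK hx, max_eq_right hfx, zero_mul]
    · have hgx : g x = f x := (hgK hx).trans (max_eq_left hfx.le)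
      have hgH : HOp m b c p g x ≤ 0 :=
        (hG.HOp_le_of_touching hp hf (hg.memF hp.ne') hx hgx.symm fun y hxy =>
          hfg (hG.mem_union_bdry hx hxy)).trans (hH x hx hfx)
      exact mul_nonpos_of_nonneg_of_nonpos (hgx ▸ hfx.le)
        (mul_nonpos_of_nonneg_of_nonpos (hG.measure_pos x).le hgH)
  have henergy : energy b c p g ≤ 0 := by
    rw [hG.energy_eq_sum_mul_HOp hp hg]
    exact Finset.sum_nonpos hterm
  have hg0 : g = 0 := by
    by_contra hne
    exact henergy.not_gt (hE g hg hne)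
  intro x hx
  exact (hfg (Or.inl hx)).trans (congrFun hg0 x).le

theorem IsGraph.nonneg_of_superharmonicOn (hG : IsGraph m b) (hp : 1 < p) (hK : K.Finite)
    (hE : EnergyPosDef b c p K) (hv : MemF b p K v) (hHv : SuperharmonicOn m b c p K v)
    (hbdry : ∀ x ∈ bdry b K, 0 ≤ v x) : ∀ x ∈ K, 0 ≤ v x := by
  have hneg := hG.nonpos_of_HOp_nonpos hp hK hE hv.neg
    (fun x hx _ => by simpa only [HOp_neg, neg_nonpos] using hHv x hx)
    (fun x hx => neg_nonpos.2 (hbdry x hx))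
  exact fun x hx => neg_nonpos.1 (hneg x hx)

theorem IsGraph.nonpos_of_eq_zero (hG : IsGraph m b) (hp : 1 < p) (hK : K.Finite)
    (hE : EnergyPosDef b c p K) (hv : MemF b p K v) (hu : MemF b p K u)
    (hHv : SuperharmonicOn m b c p K v) (hHuv : ∀ x ∈ K, HOp m b c p u x ≤ HOp m b c p v x)
    (hvnonneg : ∀ x ∈ K ∪ bdry b K, 0 ≤ v x) (hbdry : ∀ x ∈ bdry b K, u x ≤ v x) :
    ∀ x ∈ K, v x = 0 → u x ≤ 0 := by
  have hnbr {x : X} (hx : x ∈ K) (y : X) (hxy : 0 < b x y) : 0 ≤ v y :=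
    hvnonneg y (hG.mem_union_bdry hx hxy)
  have hsub : {x ∈ K | v x = 0} ⊆ K := Set.sep_subset K _
  have hzeros := hG.nonpos_of_HOp_nonpos hp (hK.subset hsub) (hE.mono hsub) (hu.mono hsub)
    (fun x hx _ => (hHuv x hx.1).trans (hG.HOp_nonpos_of_eq_zero hp hv hx.1 hx.2 (hnbr hx.1)))
    (by
      rintro y ⟨hy, x, ⟨hxK, hvx⟩, hyx⟩
      have hxy : 0 < b x y := hG.weight_symm x y ▸ hyx
      have hvy : v y = 0 :=
        hG.eq_zero_of_HOp_nonneg hp hv hxK hvx (hnbr hxK) (hHv x hxK) hxy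
      rcases hG.mem_union_bdry hxK hxy with hyK | hyK
      · exact absurd ⟨hyK, hvy⟩ hy
      · exact hvy ▸ hbdry y hyK)
  exact fun x hx hvx => hzeros x ⟨hx, hvx⟩

theorem IsGraph.nonpos_of_eq_mul (hG : IsGraph m b) (hp : 1 < p) (hK : K.Finite)
    (hE : EnergyPosDef b c p K) (hv : MemF b p K v) (hu : MemF b p K u)
    (hHv : SuperharmonicOn m b c p K v) (hHuv : ∀ x ∈ K, HOp m b c p u x ≤ HOp m b c p v x)
    (hbdry : ∀ x ∈ bdry b K, u x ≤ v x) {t : ℝ} (ht : 1 < t)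
    (hle : ∀ x ∈ K ∪ bdry b K, u x ≤ t * v x) : ∀ x ∈ K, u x = t * v x → v x ≤ 0 := by
  have htpow : 1 < t ^ (p - 1) := Real.one_lt_rpow ht (sub_pos.2 hp)
  have hsmul (x : X) : HOp m b c p (t • v) x = t ^ (p - 1) * HOp m b c p v x :=
    HOp_smul v x (zero_lt_one.trans ht)
  have hnbr {x : X} (hx : x ∈ K) (y : X) (hxy : 0 < b x y) : u y ≤ (t • v) y :=
    hle y (hG.mem_union_bdry hx hxy)
  have hsub : {x ∈ K | u x = t * v x} ⊆ K := Set.sep_subset K _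
  have hcontact := hG.nonpos_of_HOp_nonpos hp (hK.subset hsub) (hE.mono hsub) (hv.mono hsub)
    (fun x ⟨hxK, hux⟩ _ => by
      have hHt : HOp m b c p (t • v) x ≤ HOp m b c p u x :=
        hG.HOp_le_of_touching hp hu (hv.smul t) hxK hux (hnbr hxK)
      have hHv_le : t ^ (p - 1) * HOp m b c p v x ≤ HOp m b c p v x :=
        hsmul x ▸ hHt.trans (hHuv x hxK)
      by_contra! hpos
      exact hHv_le.not_gt (lt_mul_of_one_lt_left hpos htpow))
    (by
      rintro y ⟨hy, x, ⟨hxK, hux⟩, hyx⟩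
      have hxy : 0 < b x y := hG.weight_symm x y ▸ hyx
      have hHt : HOp m b c p u x ≤ HOp m b c p (t • v) x := by
        rw [hsmul]
        exact (hHuv x hxK).trans (le_mul_of_one_le_left (hHv x hxK) htpow.le)
      have huy : u y = t * v y :=
        hG.eq_of_touching_of_HOp_le hp hu (hv.smul t) hxK hux (hnbr hxK) hHt hxy
      rcases hG.mem_union_bdry hxK hxy with hyK | hyK
      · exact absurd ⟨hyK, huy⟩ hy
      · by_contra! hpos
        exact (hbdry y hyK).not_gt (huy ▸ lt_mul_of_one_lt_left hpos ht))
  exact fun x hx hux => hcontact x ⟨hx, hux⟩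

theorem stmt15_general (hG : IsGraph m b) (hp : 1 < p) (hK : K.Finite)
    (hE : EnergyPosDef b c p K) (hv : MemF b p K v) (hu : MemF b p K u)
    (hHv : SuperharmonicOn m b c p K v) (hvbdry : ∀ x ∈ bdry b K, 0 ≤ v x)
    (hHuv : ∀ x ∈ K, HOp m b c p u x ≤ HOp m b c p v x)
    (hbdry : ∀ x ∈ bdry b K, u x ≤ v x) : ∀ x ∈ K, u x ≤ v x := by
  have hvK : ∀ x ∈ K, 0 ≤ v x := hG.nonneg_of_superharmonicOn hp hK hE hv hHv hvbdry
  have hzero : ∀ x ∈ K, v x = 0 → u x ≤ 0 :=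
    hG.nonpos_of_eq_zero hp hK hE hv hu hHv hHuv (fun x hx => hx.elim (hvK x) (hvbdry x)) hbdry
  by_contra! hlt
  obtain ⟨t, ht, hle, x, hx, hvx, hux⟩ := exists_one_lt_forall_le_mul hK hvK hzero hlt
  have hle_bdry (y : X) (hy : y ∈ bdry b K) : u y ≤ t * v y :=
    (hbdry y hy).trans (le_mul_of_one_le_left (hvbdry y hy) ht.le)
  exact (hG.nonpos_of_eq_mul hp hK hE hv hu hHv hHuv hbdry ht
    (fun y hy => hy.elim (hle y) (hle_bdry y)) x hx hux).not_gt hvx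

end ComparisonPrinciples

theorem stmt15 {X : Type*} [Countable X] [Infinite X]
    (m : X → ℝ) (b : X → X → ℝ) (c : X → ℝ) (p : ℝ)
    (hG : IsGraph m b) (hgconn : ConnectedIn b Set.univ) (hp : 1 < p)
    (K Kt : Set X) (hKKt : K ⊆ Kt) (hK : K.Finite) (hKt : Kt.Finite)
    (hlam : 0 < lam0 m b c p Kt)
    (u v : X → ℝ) (hvF : MemF b p K v) (huF : MemF b p K u)
    (hHv : ∀ x ∈ K, 0 ≤ HOp m b c p v x)
    (hvbd : ∀ x ∈ bdry b K ∪ (Kt \ K), 0 ≤ v x)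
    (hHuv : ∀ x ∈ K, HOp m b c p u x ≤ HOp m b c p v x)
    (hubd : ∀ x ∈ bdry b K ∪ (Kt \ K), u x ≤ v x)
    (hcase : (∀ x ∉ Kt, v x = 0) ∨
      ((∀ x ∉ Kt, u x = 0) ∧ (∀ x ∈ K, 0 ≤ HOp m b c p u x) ∧
        ∀ x ∈ bdry b K ∪ (Kt \ K), 0 ≤ u x)) :
    ∀ x ∈ K, u x ≤ v x := by
  have hE := energyPosDef_of_lam0_pos (fun x => (hG.measure_pos x).le) hlam
  exact stmt15_general hG hp hK (hE.mono hKKt) hvF huF hHv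
    (fun x hx => hvbd x (.inl hx)) hHuv fun x hx => hubd x (.inl hx)
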